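/- arXiv:2204.03299 — 3 statements merged into one kernel-verified Lean document; each statement's English description precedes it below -/
import Mathlib

section
/- (Theorem 1, core of convergence result) The function Φ is a generalized ordinal potential for the opinion game: for every opinion profile x ∈ Θ^n, every agent i, and every opinion y ∈ Θ, if c_i(x) − c_i(y, x_{−i}) > 0 then Φ(x) − Φ(y, x_{−i}) > 0, where (y, x_{−i}) denotes the profile obtained from x when agent i switches from x_i to y. -/
open Finset

/-- The recommendation function with threshold λ = 1/2. -/
noncomputable def sRec (x : ℝ) : ℝ :=
  if x < -(1/2 : ℝ) then -1 else if (1/2 : ℝ) < x then 1 else 0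

/-- Membership in the opinion grid Θ = {-1, -1+δ, …, 1-δ, 1}. -/
def inGrid (δ x : ℝ) : Prop := |x| ≤ 1 ∧ ∃ k : ℤ, x = k * δ

/-- Cost to agent `i` of holding opinion `y` when the current profile is `x`.
Non-edges are modelled by weight `0`. -/
noncomputable def cost {n : ℕ} (b : ℝ) (w : Fin n → Fin n → ℝ) (i : Fin n)
    (y : ℝ) (x : Fin n → ℝ) : ℝ :=
  b * (y - sRec (x i)) ^ 2 + ∑ j, w i j * (y - x j) ^ 2

/-- The potential Φ(x) = Σ_i b(x_i − s(x_i))² + Σ_{(i,j)∈E} w_{ij}(x_i − x_j)²;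
the sum over undirected edges equals half of the sum over ordered pairs. -/
noncomputable def pot {n : ℕ} (b : ℝ) (w : Fin n → Fin n → ℝ) (x : Fin n → ℝ) : ℝ :=
  (∑ i, b * (x i - sRec (x i)) ^ 2) + (1/2) * ∑ i, ∑ j, w i j * (x i - x j) ^ 2

theorem sRec_best (y z : ℝ) : (y - sRec y) ^ 2 ≤ (y - sRec z) ^ 2 := by
  unfold sRec
  split_ifs <;> nlinarith

/-- Φ is a generalized ordinal potential for the opinion game. -/
theorem generalized_ordinal_potential
    {n : ℕ} (hn : 2 ≤ n) (m : ℕ) (hm : 2 ≤ m) (δ : ℝ) (hδ : δ = 1 / m)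
    (b : ℝ) (hb : 0 < b) (w : Fin n → Fin n → ℝ)
    (hsym : ∀ i j, w i j = w j i) (hdiag : ∀ i, w i i = 0)
    (hw : ∀ i j, 0 ≤ w i j)
    (x : Fin n → ℝ) (hx : ∀ i, inGrid δ (x i))
    (i : Fin n) (y : ℝ) (hy : inGrid δ y)
    (himp : cost b w i (x i) x - cost b w i y x > 0) :
    pot b w x - pot b w (Function.update x i y) > 0 := by
  have h1 : (∑ a, b * (x a - sRec (x a)) ^ 2)
      - ∑ a, b * (Function.update x i y a - sRec (Function.update x i y a)) ^ 2
      = b * (x i - sRec (x i)) ^ 2 - b * (y - sRec y) ^ 2 := by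
    rw [← Finset.sum_sub_distrib, Finset.sum_eq_single i]
    · simp
    · intro a _ ha
      simp [Function.update_of_ne ha]
    · simp
  have h2 : (∑ a, ∑ j, w a j * (x a - x j) ^ 2)
      - ∑ a, ∑ j, w a j * (Function.update x i y a - Function.update x i y j) ^ 2
      = 2 * ∑ j, w i j * ((x i - x j) ^ 2 - (y - x j) ^ 2) := by
    have h3 : ∀ a j, w a j * (x a - x j) ^ 2
        - w a j * (Function.update x i y a - Function.update x i y j) ^ 2
        = (if a = i then w i j * ((x i - x j) ^ 2 - (y - x j) ^ 2) else 0)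
        + (if j = i then w i a * ((x i - x a) ^ 2 - (y - x a) ^ 2) else 0) := by
      intro a j
      by_cases ha : a = i
      · by_cases hj : j = i
        · subst ha
          subst hj
          simp [hdiag]
        · subst ha
          simp [Function.update_of_ne hj, hj]
          ring
      · by_cases hj : j = i
        · subst hj
          simp [Function.update_of_ne ha, ha, hsym a j]
          ring
        · simp [Function.update_of_ne ha, Function.update_of_ne hj, ha, hj]
    simp_rw [← Finset.sum_sub_distrib, h3, Finset.sum_add_distrib]
    rw [Finset.sum_comm]
    simp
    ring
  have h4 : ∑ j, w i j * ((x i - x j) ^ 2 - (y - x j) ^ 2)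
      = (∑ j, w i j * (x i - x j) ^ 2) - ∑ j, w i j * (y - x j) ^ 2 := by
    simp_rw [mul_sub, Finset.sum_sub_distrib]
  have h5 := mul_le_mul_of_nonneg_left (sRec_best y (x i)) hb.le
  unfold cost at himp
  unfold pot
  linarith
end

section
/- (Existence of stable profiles) In the opinion game, a consensus on an extreme opinion is always stable: the profile in which every agent holds opinion 1 is a Nash equilibrium, and likewise the profile in which every agent holds opinion −1 is a Nash equilibrium. In particular, the opinion game always possesses a Nash equilibrium. -/
open Finset

/-- A profile is a Nash equilibrium (stable) if every agent's opinion minimizes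
her cost over Θ. -/
def NashEq {n : ℕ} (δ b : ℝ) (w : Fin n → Fin n → ℝ) (x : Fin n → ℝ) : Prop :=
  ∀ i y, inGrid δ y → cost b w i (x i) x ≤ cost b w i y x

/-- Consensus on the extreme opinions 1 and −1 is always stable; in particular
the opinion game always possesses a Nash equilibrium (with a profile in Θⁿ). -/
theorem consensus_on_extremes_stable
    {n : ℕ} (hn : 2 ≤ n) (m : ℕ) (hm : 2 ≤ m) (δ : ℝ) (hδ : δ = 1 / m)
    (b : ℝ) (hb : 0 < b) (w : Fin n → Fin n → ℝ)
    (hsym : ∀ i j, w i j = w j i) (hdiag : ∀ i, w i i = 0)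
    (hw : ∀ i j, 0 ≤ w i j) :
    NashEq δ b w (fun _ => (1 : ℝ)) ∧ NashEq δ b w (fun _ => (-1 : ℝ)) ∧
    ∃ x : Fin n → ℝ, (∀ i, inGrid δ (x i)) ∧ NashEq δ b w x := by
  have key : ∀ c : ℝ, sRec c = c → NashEq δ b w (fun _ => c) := by
    intro c hc i y _
    have h : 0 ≤ ∑ j, w i j * (y - c) ^ 2 :=
      Finset.sum_nonneg fun j _ => mul_nonneg (hw i j) (sq_nonneg _)
    have h2 : 0 ≤ b * (y - c) ^ 2 := mul_nonneg hb.le (sq_nonneg _)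
    simp only [cost, hc, sub_self]
    simp only [ne_eq, OfNat.ofNat_ne_zero, not_false_eq_true, zero_pow, mul_zero,
      Finset.sum_const_zero, add_zero]
    exact add_nonneg h2 h
  have h1 : NashEq δ b w (fun _ => (1 : ℝ)) := key 1 (by norm_num [sRec])
  refine ⟨h1, key (-1) (by norm_num [sRec]), fun _ => 1, fun _ => ⟨by simp, m, ?_⟩, h1⟩
  have hm0 : (m : ℝ) ≠ 0 := by
    have : m ≠ 0 := by omega
    exact_mod_cast this
  rw [hδ]
  push_cast
  field_simp
end

section
/- (Theorem: exponential-time instances) For every integer n ≥ 1 there exist an undirected weighted graph G = (V,E,w) with |V| = 6n+1 vertices and positive edge weights, a social-media influence strength b > 0, an initial opinion profile x⁰ ∈ Θ^V with discretization factor δ = 1/2, and a sequence of opinion profiles x⁰, x¹, …, x^T with T ≥ 2^{n−1} in which each x^{t+1} is obtained from x^t by an asynchronous improvement step of the corresponding opinion game. In particular, the opinion dynamics with asynchronous updates may take a number of steps exponential in the number of agents before converging. -/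
open Finset

/-- An asynchronous improvement step: a single agent `i` switches to an opinion
`y ∈ Θ` that strictly decreases her cost. -/
def ImprStep {n : ℕ} (δ b : ℝ) (w : Fin n → Fin n → ℝ) (x x' : Fin n → ℝ) : Prop :=
  ∃ i y, inGrid δ y ∧ cost b w i y x < cost b w i (x i) x ∧ x' = Function.update x i y

namespace ExpSeq

/-- Indicator of the undirected edge `{a,b}`. -/
noncomputable def ed (a b i j : ℕ) : ℝ :=
  (if i = a ∧ j = b then 1 else 0) + (if i = b ∧ j = a then 1 else 0)

/-- Scale of level `k`. -/
noncomputable def sc (n k : ℕ) : ℝ := if k < n then (1/5 : ℝ) ^ k else 0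

/-- The weights. Level `k` has nodes `3k+1, 3k+2, 3k+3`; node `0` is frozen. -/
noncomputable def W (n i j : ℕ) : ℝ :=
  ∑ k ∈ range n, sc n k * (3 * ed (3*k+1) (3*k+2) i j + 2 * ed (3*k+2) (3*k+3) i j
    + ed (3*k+3) (3*k+4) i j + ed (3*k+1) (3*k+4) i j + ed 0 (3*k+4) i j)

lemma sc_nonneg (n k : ℕ) : 0 ≤ sc n k := by
  unfold sc; split_ifs <;> positivity

lemma sc_pos {n k : ℕ} (h : k < n) : 0 < sc n k := by
  unfold sc; rw [if_pos h]; positivity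

lemma sc_succ (n k : ℕ) : 5 * sc n (k+1) ≤ sc n k := by
  unfold sc
  by_cases h : k + 1 < n
  · rw [if_pos h, if_pos (by omega), pow_succ]; linarith
  · rw [if_neg h]; split_ifs <;> simp

lemma ed_symm (a b i j : ℕ) : ed a b i j = ed a b j i := by
  unfold ed
  rw [add_comm]
  simp only [and_comm]

lemma ed_diag (a b i : ℕ) (h : a ≠ b) : ed a b i i = 0 := by
  unfold ed
  rw [if_neg (by omega), if_neg (by omega)]; simp

lemma ed_nonneg (a b i j : ℕ) : 0 ≤ ed a b i j := by
  unfold ed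
  split_ifs <;> norm_num

lemma W_symm (n i j : ℕ) : W n i j = W n j i := by
  unfold W
  refine Finset.sum_congr rfl fun k _ => ?_
  simp only [ed_symm _ _ i j]

lemma W_diag (n i : ℕ) : W n i i = 0 := by
  unfold W
  refine Finset.sum_eq_zero fun k _ => ?_
  rw [ed_diag _ _ _ (by omega), ed_diag _ _ _ (by omega), ed_diag _ _ _ (by omega),
    ed_diag _ _ _ (by omega), ed_diag _ _ _ (by omega)]
  simp

lemma W_nonneg (n i j : ℕ) : 0 ≤ W n i j := by
  unfold W
  refine Finset.sum_nonneg fun k _ => mul_nonneg (sc_nonneg _ _) ?_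
  have h := fun a b => ed_nonneg a b i j
  have h1 := h (3*k+1) (3*k+2)
  have h2 := h (3*k+2) (3*k+3)
  have h3 := h (3*k+3) (3*k+4)
  have h4 := h (3*k+1) (3*k+4)
  have h5 := h 0 (3*k+4)
  linarith

/-- The contribution of an edge to the local field. -/
noncomputable def ef (a b i : ℕ) (x : ℕ → ℝ) : ℝ :=
  (if i = a then x b else 0) + (if i = b then x a else 0)

lemma sum_ed (N a b i : ℕ) (x : ℕ → ℝ) (ha : a < N) (hb : b < N) :
    ∑ j ∈ range N, ed a b i j * x j = ef a b i x := by
  unfold ed ef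
  simp only [add_mul, Finset.sum_add_distrib, ite_and, ite_mul, one_mul, zero_mul]
  congr 1
  · by_cases h : i = a <;> simp [h, hb]
  · by_cases h : i = b <;> simp [h, ha]

/-- The local field. -/
noncomputable def G (n i : ℕ) (x : ℕ → ℝ) : ℝ :=
  ∑ k ∈ range n, sc n k * (3 * ef (3*k+1) (3*k+2) i x + 2 * ef (3*k+2) (3*k+3) i x
    + ef (3*k+3) (3*k+4) i x + ef (3*k+1) (3*k+4) i x + ef 0 (3*k+4) i x)

lemma sum_W (n i : ℕ) (x : ℕ → ℝ) :
    ∑ j ∈ range (6*n+1), W n i j * x j = G n i x := by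
  unfold W G
  simp only [Finset.sum_mul]
  rw [Finset.sum_comm]
  refine Finset.sum_congr rfl fun k hk => ?_
  have hk := Finset.mem_range.1 hk
  rw [← sum_ed (6*n+1) (3*k+1) (3*k+2) i x (by omega) (by omega),
    ← sum_ed (6*n+1) (3*k+2) (3*k+3) i x (by omega) (by omega),
    ← sum_ed (6*n+1) (3*k+3) (3*k+4) i x (by omega) (by omega),
    ← sum_ed (6*n+1) (3*k+1) (3*k+4) i x (by omega) (by omega),
    ← sum_ed (6*n+1) 0 (3*k+4) i x (by omega) (by omega)]
  simp only [Finset.mul_sum, ← Finset.sum_add_distrib]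
  refine Finset.sum_congr rfl fun j _ => ?_
  ring

lemma sum_pick (n j : ℕ) (f : ℕ → ℝ) :
    ∑ k ∈ range n, (if k = j then sc n k * f k else 0) = sc n j * f j := by
  rw [Finset.sum_ite_eq']
  by_cases h : j < n
  · simp [h]
  · simp [h, sc]

lemma G_u (n j : ℕ) (x : ℕ → ℝ) : G n (3*j+4) x =
    sc n j * (x (3*j+3) + x (3*j+1) + x 0) + sc n (j+1) * (3 * x (3*j+5) + x (3*j+7)) := by
  have h1 := sum_pick n j (fun k => x (3*k+3) + x (3*k+1) + x 0)
  have h2 := sum_pick n (j+1) (fun k => 3 * x (3*k+2) + x (3*k+4))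
  have e1 : 3*(j+1)+2 = 3*j+5 := by ring
  have e2 : 3*(j+1)+4 = 3*j+7 := by ring
  simp only [e1, e2] at h2
  rw [← h1, ← h2, ← Finset.sum_add_distrib]
  unfold G
  refine Finset.sum_congr rfl fun k _ => ?_
  unfold ef
  by_cases ha : k = j
  · subst ha
    simp
  by_cases hb : k = j+1
  · subst hb
    simp [show 3*j+4 = 3*(j+1)+1 by ring]
  · rw [if_neg ha, if_neg hb]
    rw [if_neg (by omega), if_neg (by omega), if_neg (by omega), if_neg (by omega),
      if_neg (by omega), if_neg (by omega), if_neg (by omega), if_neg (by omega)]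
    simp
    intro h
    omega

lemma G_p (n j : ℕ) (x : ℕ → ℝ) : G n (3*j+2) x =
    sc n j * (3 * x (3*j+1) + 2 * x (3*j+3)) := by
  have h1 := sum_pick n j (fun k => 3 * x (3*k+1) + 2 * x (3*k+3))
  rw [← h1]
  unfold G
  refine Finset.sum_congr rfl fun k _ => ?_
  unfold ef
  by_cases ha : k = j
  · subst ha
    simp
  · rw [if_neg ha]
    rw [if_neg (by omega), if_neg (by omega), if_neg (by omega), if_neg (by omega),
      if_neg (by omega), if_neg (by omega), if_neg (by omega), if_neg (by omega)]
    simp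
    intro h
    omega

lemma G_b (n j : ℕ) (x : ℕ → ℝ) : G n (3*j+3) x =
    sc n j * (2 * x (3*j+2) + x (3*j+4)) := by
  have h1 := sum_pick n j (fun k => 2 * x (3*k+2) + x (3*k+4))
  rw [← h1]
  unfold G
  refine Finset.sum_congr rfl fun k _ => ?_
  unfold ef
  by_cases ha : k = j
  · subst ha
    simp
  · rw [if_neg ha]
    rw [if_neg (by omega), if_neg (by omega), if_neg (by omega), if_neg (by omega),
      if_neg (by omega), if_neg (by omega), if_neg (by omega), if_neg (by omega)]
    simp
    intro h
    omega

/-- Improvement steps used in the construction. -/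
def NStep (n : ℕ) (x x' : ℕ → ℝ) : Prop :=
  ∃ i, i < 6*n+1 ∧ ∃ c : ℝ, (c = 1/2 ∨ c = -1/2) ∧ x i = -c ∧ 0 < c * G n i x ∧
    x' = Function.update x i c

lemma NStep.impr {n : ℕ} {x x' : ℕ → ℝ} (h : NStep n x x') :
    ImprStep (1/2) 1 (fun i j : Fin (6*n+1) => W n i j) (fun i => x i) (fun i => x' i) := by
  obtain ⟨i, hi, c, hc, hx, hG, rfl⟩ := h
  refine ⟨⟨i, hi⟩, c, ?_, ?_, ?_⟩
  · rcases hc with rfl | rfl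
    · exact ⟨by rw [abs_le]; norm_num, 1, by norm_num⟩
    · exact ⟨by rw [abs_le]; norm_num, -1, by norm_num⟩
  · unfold cost
    simp only [hx]
    have hs : sRec (-c) = 0 := by
      unfold sRec
      rcases hc with rfl | rfl <;> norm_num
    rw [hs]
    have key : ∑ j : Fin (6*n+1), W n i j * (-c - x j)^2
        = ∑ j : Fin (6*n+1), W n i j * (c - x j)^2 + 4 * (c * G n i x) := by
      rw [← sum_W, ← Fin.sum_univ_eq_sum_range (fun j => W n i j * x j), Finset.mul_sum,
        Finset.mul_sum, ← Finset.sum_add_distrib]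
      refine Finset.sum_congr rfl fun j _ => ?_
      ring
    rw [key]
    nlinarith
  · funext j
    by_cases h : (j : ℕ) = i
    · have : j = ⟨i, hi⟩ := Fin.ext h
      subst this
      simp
    · rw [Function.update_of_ne h, Function.update_of_ne (fun e => h (by rw [e]))]

/-- Paths with a length. -/
inductive Path {α : Type} (R : α → α → Prop) : ℕ → α → α → Prop
  | nil (x : α) : Path R 0 x x
  | cons {m : ℕ} {x y z : α} : R x y → Path R m y z → Path R (m+1) x z

lemma Path.trans {α : Type} {R : α → α → Prop} {m k : ℕ} {x y z : α}
    (h : Path R m x y) (h' : Path R k y z) : Path R (m+k) x z := by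
  induction h with
  | nil x => simpa using h'
  | cons hr _ ih =>
    have := Path.cons hr (ih h')
    convert this using 1
    omega

lemma Path.seq {α : Type} {R : α → α → Prop} {m : ℕ} {x y : α}
    (h : Path R m x y) : ∃ f : ℕ → α, f 0 = x ∧ ∀ t, t < m → R (f t) (f (t+1)) := by
  induction h with
  | nil x => exact ⟨fun _ => x, rfl, by simp⟩
  | @cons m x y z hr _ ih =>
    obtain ⟨f, h0, hf⟩ := ih
    refine ⟨fun t => Nat.casesOn t x f, rfl, ?_⟩
    intro t ht
    cases t with
    | zero => simpa [h0] using hr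
    | succ t => exact hf t (by omega)

/-- Levels above `k` are at rest. -/
def Rest (n k : ℕ) (x : ℕ → ℝ) : Prop :=
  ∀ l, k ≤ l → l ≤ n → x (3*l+1) = -1/2 ∧ (l < n → x (3*l+2) = -1/2 ∧ x (3*l+3) = 1/2)

/-- Level `k` is in state `c`, and all further levels are at rest. -/
def Ready (n k : ℕ) (c : ℝ) (x : ℕ → ℝ) : Prop :=
  x (3*k+1) = c ∧ (k < n → x (3*k+2) = c ∧ x (3*k+3) = -c) ∧ Rest n (k+1) x

lemma Rest.ready {n k : ℕ} {x : ℕ → ℝ} (h : Rest n k x) (hk : k ≤ n) :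
    Ready n k (-1/2) x := by
  obtain ⟨h1, h2⟩ := h k le_rfl hk
  exact ⟨h1, fun hh => ⟨(h2 hh).1, by rw [(h2 hh).2]; norm_num⟩,
    fun l hl hl' => h l (by omega) hl'⟩

lemma Ready.rest {n k : ℕ} {x : ℕ → ℝ} (h : Ready n k (-1/2) x) : Rest n k x := by
  intro l hl hl'
  rcases hl.eq_or_lt with rfl | hlt
  · exact ⟨h.1, fun hh => ⟨(h.2.1 hh).1, by rw [(h.2.1 hh).2]; norm_num⟩⟩
  · exact h.2.2 l hlt hl'

lemma Ready.congr {n k : ℕ} {c : ℝ} {x y : ℕ → ℝ} (h : Ready n k c x)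
    (hxy : ∀ i, 3*k+1 ≤ i → y i = x i) : Ready n k c y := by
  refine ⟨?_, ?_, ?_⟩
  · rw [hxy _ (by omega)]; exact h.1
  · rw [hxy _ (by omega), hxy _ (by omega)]; exact h.2.1
  · intro l hl hl'
    rw [hxy _ (by omega), hxy _ (by omega), hxy _ (by omega)]; exact h.2.2 l hl hl'

lemma flip {n : ℕ} {x : ℕ → ℝ} (i : ℕ) (c : ℝ) (hi : i < 6*n+1) (hc : c = 1/2 ∨ c = -1/2)
    (hx : x i = -c) (hG : 0 < c * G n i x) :
    ∃ y, NStep n x y ∧ y i = c ∧ ∀ k, k ≠ i → y k = x k :=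
  ⟨Function.update x i c, ⟨i, hi, c, hc, hx, hG, rfl⟩, by simp,
    fun k hk => Function.update_of_ne hk _ _⟩

/-- A full pulse of level `j+1`. -/
def Pulse (n j : ℕ) : Prop :=
  ∀ (c : ℝ) (x : ℕ → ℝ), (c = 1/2 ∨ c = -1/2) → Ready n (j+1) (-c) x →
    x 0 = -1/2 → x (3*j+3) + x (3*j+1) + x 0 = c →
    ∃ m y, 2^(n-(j+1)) ≤ m ∧ Path (NStep n) m x y ∧ Ready n (j+1) c y ∧
      ∀ i, i < 3*j+4 → y i = x i

lemma pulse_base (j : ℕ) : Pulse (j+1) j := by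
  intro c x hc hr hF hx
  refine ⟨1, Function.update x (3*j+4) c, by simp, Path.cons ?_ (Path.nil _), ?_, ?_⟩
  · refine ⟨3*j+4, by omega, c, hc, hr.1, ?_, rfl⟩
    rw [G_u, hx]
    have h0 : sc (j+1) (j+1) = 0 := by simp [sc]
    have h1 : 0 < sc (j+1) j := sc_pos (by omega)
    rw [h0]
    rcases hc with rfl | rfl <;> linarith
  · refine ⟨by simp [show 3*(j+1)+1 = 3*j+4 by ring], fun h => by omega, fun l hl hl' => by omega⟩
  · intro i hi
    rw [Function.update_of_ne (by omega)]

lemma pulse_step (n j : ℕ) (hj : j + 1 < n) (ih : Pulse n (j+1)) : Pulse n j := by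
  intro c x hc hr hF hx
  have hs := sc_pos hj
  have hs5 := sc_succ n j
  obtain ⟨hu, hpb, hrest⟩ := hr
  obtain ⟨hp, hb⟩ := hpb hj
  have hz : Ready n (j+2) (-1/2) x := hrest.ready (by omega)
  have hz0 := hz.1
  have Gu := G_u n j
  have Gp := G_p n (j+1)
  have Gb := G_b n (j+1)
  unfold Pulse at ih
  have a1 : 3*(j+1)+1 = 3*j+4 := by ring
  have a2 : 3*(j+1)+2 = 3*j+5 := by ring
  have a3 : 3*(j+1)+3 = 3*j+6 := by ring
  have a4 : 3*(j+1)+4 = 3*j+7 := by ring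
  have a5 : 3*(j+2)+1 = 3*j+7 := by ring
  have a6 : j+1+1 = j+2 := by ring
  simp only [a1, a2, a3, a4, a5, a6] at ih hu hp hb hz hz0 Gp Gb hs hs5
  have hlen : ∀ m1 m2, 2^(n-(j+2)) ≤ m1 → 2^(n-(j+2)) ≤ m2 → 2^(n-(j+1)) ≤ m1 + m2 := by
    intro m1 m2 h1 h2
    rw [show n-(j+1) = n-(j+2)+1 by omega, pow_succ]
    omega
  rcases hc with rfl | rfl
  · -- rising
    obtain ⟨x1, s1, v1, r1⟩ := flip (n := n) (x := x) (3*j+4) (1/2) (by omega) (Or.inl rfl) hu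
      (by rw [Gu, hx, hp, hz0]; linarith)
    obtain ⟨m1, y1, l1, p1, q1, t1⟩ := ih (1/2) x1 (Or.inl rfl)
      (by
        rw [show (-(1/2) : ℝ) = -1/2 by norm_num]
        exact hz.congr fun i hi => r1 i (by omega))
      (by rw [r1 _ (by omega), hF])
      (by rw [v1, r1 _ (by omega), r1 _ (by omega), hb, hF]; norm_num)
    have q1z := q1.1
    rw [a5] at q1z
    obtain ⟨x2, s2, v2, r2⟩ := flip (n := n) (x := y1) (3*j+6) (-1/2) (by omega) (Or.inr rfl)
      (by rw [t1 _ (by omega), r1 _ (by omega), hb]; norm_num)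
      (by rw [Gb, q1z, t1 _ (by omega), r1 _ (by omega), hp]; linarith)
    obtain ⟨m2, y2, l2, p2, q2, t2⟩ := ih (-1/2) x2 (Or.inr rfl)
      (by
        rw [show (-(-1/2) : ℝ) = 1/2 by norm_num]
        exact q1.congr fun i hi => r2 i (by omega))
      (by rw [r2 _ (by omega), t1 _ (by omega), r1 _ (by omega), hF])
      (by
        rw [v2, r2 _ (by omega), r2 _ (by omega), t1 _ (by omega), t1 _ (by omega), v1,
          r1 _ (by omega), hF]; norm_num)
    have w4 : y2 (3*j+4) = 1/2 := by rw [t2 _ (by omega), r2 _ (by omega), t1 _ (by omega), v1]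
    have w5 : y2 (3*j+5) = -(1/2) := by
      rw [t2 _ (by omega), r2 _ (by omega), t1 _ (by omega), r1 _ (by omega), hp]
    have w6 : y2 (3*j+6) = -1/2 := by rw [t2 _ (by omega), v2]
    obtain ⟨x3, s3, v3, r3⟩ := flip (n := n) (x := y2) (3*j+5) (1/2) (by omega) (Or.inl rfl)
      w5 (by rw [Gp, w4, w6]; linarith)
    refine ⟨_, x3, ?_, Path.cons s1 (p1.trans (Path.cons s2 (p2.trans
      (Path.cons s3 (Path.nil _))))), ⟨?_, ?_, ?_⟩, ?_⟩
    · have := hlen m1 m2 l1 l2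
      omega
    · rw [a1, r3 _ (by omega), w4]
    · intro _
      rw [a2, a3, v3, r3 _ (by omega), w6]
      norm_num
    · exact Ready.rest (q2.congr fun i hi => r3 i (by omega))
    · intro i hi
      rw [r3 _ (by omega), t2 _ (by omega), r2 _ (by omega), t1 _ (by omega), r1 _ (by omega)]
  · -- falling
    obtain ⟨x1, s1, v1, r1⟩ := flip (n := n) (x := x) (3*j+6) (1/2) (by omega) (Or.inl rfl)
      (by rw [hb]; norm_num) (by rw [Gb, hp, hz0]; linarith)
    obtain ⟨m1, y1, l1, p1, q1, t1⟩ := ih (1/2) x1 (Or.inl rfl)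
      (by
        rw [show (-(1/2) : ℝ) = -1/2 by norm_num]
        exact hz.congr fun i hi => r1 i (by omega))
      (by rw [r1 _ (by omega), hF])
      (by rw [v1, r1 _ (by omega), r1 _ (by omega), hu, hF]; norm_num)
    have q1z := q1.1
    rw [a5] at q1z
    obtain ⟨x2, s2, v2, r2⟩ := flip (n := n) (x := y1) (3*j+4) (-1/2) (by omega) (Or.inr rfl)
      (by rw [t1 _ (by omega), r1 _ (by omega), hu])
      (by
        rw [Gu, q1z, t1 _ (by omega), t1 _ (by omega), t1 _ (by omega), t1 _ (by omega),
          r1 _ (by omega), r1 _ (by omega), r1 _ (by omega), r1 _ (by omega), hx, hp]; linarith)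
    obtain ⟨m2, y2, l2, p2, q2, t2⟩ := ih (-1/2) x2 (Or.inr rfl)
      (by
        rw [show (-(-1/2) : ℝ) = 1/2 by norm_num]
        exact q1.congr fun i hi => r2 i (by omega))
      (by rw [r2 _ (by omega), t1 _ (by omega), r1 _ (by omega), hF])
      (by
        rw [v2, r2 _ (by omega), r2 _ (by omega), t1 _ (by omega), t1 _ (by omega), v1,
          r1 _ (by omega), hF]; norm_num)
    have w4 : y2 (3*j+4) = -1/2 := by rw [t2 _ (by omega), v2]
    have w5 : y2 (3*j+5) = -(-1/2) := by
      rw [t2 _ (by omega), r2 _ (by omega), t1 _ (by omega), r1 _ (by omega), hp]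
    have w6 : y2 (3*j+6) = 1/2 := by rw [t2 _ (by omega), r2 _ (by omega), t1 _ (by omega), v1]
    obtain ⟨x3, s3, v3, r3⟩ := flip (n := n) (x := y2) (3*j+5) (-1/2) (by omega) (Or.inr rfl)
      w5 (by rw [Gp, w4, w6]; linarith)
    refine ⟨_, x3, ?_, Path.cons s1 (p1.trans (Path.cons s2 (p2.trans
      (Path.cons s3 (Path.nil _))))), ⟨?_, ?_, ?_⟩, ?_⟩
    · have := hlen m1 m2 l1 l2
      omega
    · rw [a1, r3 _ (by omega), w4]
    · intro _
      rw [a2, a3, v3, r3 _ (by omega), w6]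
      norm_num
    · exact Ready.rest (q2.congr fun i hi => r3 i (by omega))
    · intro i hi
      rw [r3 _ (by omega), t2 _ (by omega), r2 _ (by omega), t1 _ (by omega), r1 _ (by omega)]

lemma pulse (n j : ℕ) (hj : j < n) : Pulse n j := by
  obtain ⟨m, rfl⟩ : ∃ m, n = j + 1 + m := ⟨n - (j+1), by omega⟩
  clear hj
  induction m generalizing j with
  | zero => exact pulse_base j
  | succ m ih =>
    apply pulse_step _ _ (by omega)
    have := ih (j+1)
    rwa [show j + 1 + 1 + m = j + 1 + (m+1) by ring] at this

/-- The initial profile. -/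
noncomputable def startProf (i : ℕ) : ℝ :=
  if i = 0 then -1/2 else if i % 3 = 0 then 1/2 else if i = 1 then 1/2 else -1/2

lemma startProf_rest (n : ℕ) : Rest n 1 startProf := by
  intro l hl _
  unfold startProf
  refine ⟨?_, fun _ => ⟨?_, ?_⟩⟩
  · rw [if_neg (by omega), if_neg (by omega), if_neg (by omega)]
  · rw [if_neg (by omega), if_neg (by omega), if_neg (by omega)]
  · rw [if_neg (by omega), if_pos (by omega)]

lemma startProf_grid (i : ℕ) : inGrid (1/2) (startProf i) := by
  have h : startProf i = 1/2 ∨ startProf i = -1/2 := by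
    unfold startProf; split_ifs <;> simp
  rcases h with h | h <;> rw [h]
  · exact ⟨by rw [abs_le]; norm_num, 1, by norm_num⟩
  · exact ⟨by rw [abs_le]; norm_num, -1, by norm_num⟩

end ExpSeq

/-- Exponential-time instances: for every n ≥ 1 there is an opinion game on
6n+1 agents with discretization factor δ = 1/2 admitting a sequence of at least
2^(n-1) asynchronous improvement steps. -/
theorem exponential_improvement_sequence :
    ∀ n : ℕ, 1 ≤ n →
      ∃ (w : Fin (6 * n + 1) → Fin (6 * n + 1) → ℝ) (b : ℝ) (T : ℕ)
        (seq : ℕ → (Fin (6 * n + 1) → ℝ)),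
        (∀ i j, w i j = w j i) ∧ (∀ i, w i i = 0) ∧ (∀ i j, 0 ≤ w i j) ∧
        0 < b ∧ 2 ^ (n - 1) ≤ T ∧
        (∀ i, inGrid (1/2) (seq 0 i)) ∧
        (∀ t, t < T → ImprStep (1/2) b w (seq t) (seq (t + 1))) := by
  intro n hn
  obtain ⟨m, y, hm, hp, -, -⟩ := ExpSeq.pulse n 0 (by omega) (1/2) ExpSeq.startProf (Or.inl rfl)
    (by
      rw [show (-(1/2) : ℝ) = -1/2 by norm_num]
      exact (ExpSeq.startProf_rest n).ready hn)
    (by simp [ExpSeq.startProf]) (by simp [ExpSeq.startProf]; norm_num)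
  obtain ⟨f, h0, hf⟩ := hp.seq
  refine ⟨fun i j => ExpSeq.W n i j, 1, m, fun t i => f t i, fun i j => ExpSeq.W_symm n i j,
    fun i => ExpSeq.W_diag n i, fun i j => ExpSeq.W_nonneg n i j, one_pos, hm, ?_, ?_⟩
  · intro i
    simp only [h0]
    exact ExpSeq.startProf_grid i
  · intro t ht
    exact (hf t ht).impr
end
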